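/- Theorem (p = 1): let Q be a Lie point characteristic generating divergence variational symmetries of the difference Lagrangian L, i.e. (pr v L)(n,u) = R(n+1,u) − R(n,u) for all n and u, where R is a difference function depending only on forward values. Then the prolonged vector field annihilates the first integral P = T(L) − R: (pr v P)(n,u) = 0 for all n ∈ ℤ and all fields u : ℤ → ℝ^q. -/

import Mathlib

open scoped Classical

/-- Multi-indices / lattice points of the lattice `ℤ^p`. -/
abbrev Idx (p : ℕ) : Type := Fin p → ℤ

/-- Fields `u : ℤ^p → ℝ^q`. -/
abbrev Fld (p q : ℕ) : Type := Idx p → Fin q → ℝ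

/-- Difference functions (raw): functions of a lattice point and a field. -/
abbrev DFun (p q : ℕ) : Type := Idx p → Fld p q → ℝ

/-- Replace the value `u^α(m)` of the field `u` by `t`. -/
noncomputable def upd {p q : ℕ} (u : Fld p q) (m : Idx p) (α : Fin q) (t : ℝ) : Fld p q :=
  fun m' β => if m' = m ∧ β = α then t else u m' β

/-- The partial derivative `∂F/∂u_J^α (n,u)`: the derivative of `F(n,u)` with
respect to the value `u^α(n+J)`. -/
noncomputable def pd {p q : ℕ} (F : DFun p q) (J : Idx p) (α : Fin q) : DFun p q :=
  fun n u => deriv (fun t => F n (upd u (n + J) α t)) (u (n + J) α)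

/-- The shift operator `S_K`. -/
def Sh {p q : ℕ} (K : Idx p) (F : DFun p q) : DFun p q := fun n u => F (n + K) u

/-- `F` is a difference function with stencil `S`: `F(n,u)` depends on `u` only
through the finitely many values `u(n+J)`, `J ∈ S`, smoothly in those values. -/
def IsDiffFun {p q : ℕ} (F : DFun p q) (S : Finset (Idx p)) : Prop :=
  ∃ G : Idx p → (({J // J ∈ S} → Fin q → ℝ) → ℝ),
    (∀ n, ContDiff ℝ (⊤ : ℕ∞) (G n)) ∧ ∀ n u, F n u = G n fun J α => u (n + J.1) α

/-- The prolonged vector field of a characteristic `Q`, acting on a difference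
function `F` with stencil `S`:
`(pr v F)(n,u) = Σ_α Σ_{J ∈ S} (S_J Q^α)(n,u) ⬝ ∂F/∂u_J^α(n,u)`. -/
noncomputable def prv {p q : ℕ} (Q : Fin q → DFun p q) (S : Finset (Idx p))
    (F : DFun p q) : DFun p q :=
  fun n u => ∑ α : Fin q, ∑ J ∈ S, Q α (n + J) u * pd F J α n u

/-- The difference divergence of a `p`-tuple of difference functions. -/
noncomputable def DDiv {p q : ℕ} (P : Fin p → DFun p q) : DFun p q :=
  fun n u => ∑ i : Fin p, (P i (n + Pi.single i (1 : ℤ)) u - P i n u)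

/-- The Euler–Lagrange expression `E_α(F)(n,u) = Σ_{J ∈ S} (∂F/∂u_J^α)(n−J,u)`
of a difference function `F` with stencil `S`. -/
noncomputable def EL {p q : ℕ} (S : Finset (Idx p)) (F : DFun p q) (α : Fin q) : DFun p q :=
  fun n u => ∑ J ∈ S, pd F J α (n - J) u

/-- The higher Euler operator
`E_{u_J^α}(L)(n,u) = Σ_{J0 ≥ 0} (∂L/∂u_{J0+J}^α)(n−J0,u)` for a difference
function `L` depending only on forward values, with stencil `S`
(reindexed by `K = J0 + J`; terms with `K ∉ S` vanish). -/
noncomputable def hEuler {p q : ℕ} (S : Finset (Idx p)) (L : DFun p q) (J : Idx p)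
    (α : Fin q) : DFun p q :=
  fun n u => ∑ K ∈ S.filter (fun K => J ≤ K), pd L K α (n - (K - J)) u

/-- `T^i(L)(n,u) = Σ_α Σ_{J ≥ 1_i} (S_{J−1_i} Q^α)(n,u) ⬝ E_{u_J^α}(L)(n−1_i,u)`
(a finite sum: only `J` with `1_i ≤ J ≤ K` for some stencil point `K` contribute). -/
noncomputable def TT {p q : ℕ} (Q : Fin q → DFun p q) (S : Finset (Idx p)) (i : Fin p)
    (L : DFun p q) : DFun p q :=
  fun n u => ∑ α : Fin q, ∑ J ∈ S.biUnion (fun K => Finset.Icc (Pi.single i (1 : ℤ)) K),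
    Q α (n + J - Pi.single i (1 : ℤ)) u * hEuler S L J α (n - Pi.single i (1 : ℤ)) u

/-!
For a set `A` of lattice points let `D_A` be the part of the prolonged vector field that moves only
the field values at the points of `A`. Reindexing the higher Euler operators gives
`T(L)(n) = ∑_{l < n} D_{[n,∞)} L(l)`. As `Q(m,u)` depends on `u(m)` only, the parts `D_A` commute
with each other, so the symmetry condition and telescoping yield
`pr v (T(L)(n)) = D_{[n,∞)} ∑_{l < n} (R(l+1) - R(l)) = D_{[n,∞)} R(n)`: the terms far to the left
do not reach `[n,∞)`. This is `pr v (R(n))` because `R` depends on forward values only.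
-/

open Set
open scoped ContDiff

section Cylinder

variable {M E F : Type*} [NormedAddCommGroup E] [NormedSpace ℝ E]
  [NormedAddCommGroup F] [NormedSpace ℝ F]

/-- `f` is a smooth cylinder function with window `W`: a smooth function of the values of the
field at the points of `W`. -/
def IsSmoothCylinder (W : Finset M) (f : (M → E) → F) : Prop :=
  ∃ g : (W → E) → F, ContDiff ℝ ∞ g ∧ f = g ∘ W.restrict

/-- The derivative of `f` along the part over `A` of the vector field `X` on the space of fields:
only the values of the field at the points of `A` are moved. It is a line derivative because the
space of all fields `M → E` carries no norm. -/
noncomputable def lieDerivOn (X : (M → E) → M → E) (A : Set M) (f : (M → E) → F) : (M → E) → F :=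
  fun u => lineDeriv ℝ f u (A.indicator (X u))

lemma hasLineDerivAt_comp_restrict {W : Finset M} {g : (W → E) → F} {u : M → E}
    (hg : DifferentiableAt ℝ g (W.restrict u)) (v : M → E) :
    HasLineDerivAt ℝ (g ∘ W.restrict) (fderiv ℝ g (W.restrict u) (W.restrict v)) u v :=
  hg.hasFDerivAt.hasLineDerivAt (W.restrict v)

lemma IsSmoothCylinder.lineDifferentiableAt {W : Finset M} {f : (M → E) → F}
    (hf : IsSmoothCylinder W f) (u v : M → E) : LineDifferentiableAt ℝ f u v := by
  obtain ⟨g, hg, rfl⟩ := hf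
  exact (hasLineDerivAt_comp_restrict (hg.differentiable (by simp) _) v).lineDifferentiableAt

lemma IsSmoothCylinder.exists_lineDeriv_eq_clm {W : Finset M} {f : (M → E) → F}
    (hf : IsSmoothCylinder W f) (u : M → E) :
    ∃ D : (W → E) →L[ℝ] F, ∀ v, lineDeriv ℝ f u v = D (W.restrict v) := by
  obtain ⟨g, hg, rfl⟩ := hf
  exact ⟨_, fun v =>
    (hasLineDerivAt_comp_restrict (hg.differentiable (by simp) _) v).lineDeriv⟩

lemma lieDerivOn_comp_restrict {W : Finset M} {g : (W → E) → F} (hg : Differentiable ℝ g)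
    (ξ : M → E → E) (A : Set M) :
    lieDerivOn (Pi.map ξ) A (g ∘ W.restrict) =
      (fun x => fderiv ℝ g x ((Subtype.val ⁻¹' A).indicator (Pi.map (fun m : W => ξ m) x))) ∘
        W.restrict := by
  funext u
  exact (hasLineDerivAt_comp_restrict (hg _) _).lineDeriv

lemma lieDerivOn_sub {X : (M → E) → M → E} {A : Set M} {f g : (M → E) → F} {u : M → E}
    (hf : LineDifferentiableAt ℝ f u (A.indicator (X u)))
    (hg : LineDifferentiableAt ℝ g u (A.indicator (X u))) :
    lieDerivOn X A (fun u => f u - g u) u = lieDerivOn X A f u - lieDerivOn X A g u :=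
  deriv_fun_sub hf hg

lemma lieDerivOn_sum {ι : Type*} {s : Finset ι} {X : (M → E) → M → E} {A : Set M}
    {f : ι → (M → E) → F} {u : M → E}
    (hf : ∀ i ∈ s, LineDifferentiableAt ℝ (f i) u (A.indicator (X u))) :
    lieDerivOn X A (fun u => ∑ i ∈ s, f i u) u = ∑ i ∈ s, lieDerivOn X A (f i) u :=
  deriv_fun_sum hf

section Finite

variable {ι : Type*} {ξ : ι → E → E}

lemma hasFDerivAt_indicator_piMap [Finite ι] (hξ : ∀ i, Differentiable ℝ (ξ i)) (A : Set ι)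
    (x : ι → E) :
    HasFDerivAt (fun x => A.indicator (Pi.map ξ x))
      (.pi (A.indicator fun i => (fderiv ℝ (ξ i) (x i)).comp (.proj i))) x := by
  have := Fintype.ofFinite ι
  refine hasFDerivAt_pi.2 fun i => ?_
  by_cases hi : i ∈ A
  · simpa only [indicator_of_mem hi] using!
      (hξ i (x i)).hasFDerivAt.comp x (hasFDerivAt_apply i x)
  · simpa only [indicator_of_notMem hi] using hasFDerivAt_const (0 : E) x

variable [Fintype ι]

lemma contDiff_indicator_piMap {n : ℕ∞ω} (hξ : ∀ i, ContDiff ℝ n (ξ i)) (A : Set ι) :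
    ContDiff ℝ n fun x => A.indicator (Pi.map ξ x) := by
  refine contDiff_pi.2 fun i => ?_
  by_cases hi : i ∈ A
  · simpa only [indicator_of_mem hi] using! (hξ i).comp (contDiff_apply ℝ E i)
  · simpa only [indicator_of_notMem hi] using contDiff_const

-- Each component depends on its own coordinate only, so both terms of the bracket are supported on
-- `A ∩ B`, where the two fields coincide.
lemma lieBracket_indicator_piMap (hξ : ∀ i, Differentiable ℝ (ξ i)) (A B : Set ι) (x : ι → E) :
    VectorField.lieBracket ℝ (fun x => A.indicator (Pi.map ξ x))
      (fun x => B.indicator (Pi.map ξ x)) x = 0 := by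
  rw [VectorField.lieBracket_eq, sub_eq_zero, (hasFDerivAt_indicator_piMap hξ A x).fderiv,
    (hasFDerivAt_indicator_piMap hξ B x).fderiv]
  funext i
  by_cases hA : i ∈ A <;> by_cases hB : i ∈ B <;> simp [hA, hB]

lemma fderiv_fderiv_indicator_piMap_comm {g : (ι → E) → F} (hg : ContDiff ℝ 2 g)
    (hξ : ∀ i, Differentiable ℝ (ξ i)) (A B : Set ι) (x : ι → E) :
    fderiv ℝ (fun x => fderiv ℝ g x (B.indicator (Pi.map ξ x))) x (A.indicator (Pi.map ξ x)) =
      fderiv ℝ (fun x => fderiv ℝ g x (A.indicator (Pi.map ξ x))) x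
        (B.indicator (Pi.map ξ x)) := by
  have hX (C : Set ι) : DifferentiableAt ℝ (fun x => C.indicator (Pi.map ξ x)) x :=
    (hasFDerivAt_indicator_piMap hξ C x).differentiableAt
  rw [← sub_eq_zero, ← VectorField.fderiv_apply_lieBracket hg.contDiffAt (by simp)
      (hX B) (hX A),
    lieBracket_indicator_piMap hξ, map_zero]

end Finite

protected lemma IsSmoothCylinder.lieDerivOn {W : Finset M} {f : (M → E) → F}
    (hf : IsSmoothCylinder W f) {ξ : M → E → E} (hξ : ∀ m, ContDiff ℝ ∞ (ξ m)) (A : Set M) :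
    IsSmoothCylinder W (lieDerivOn (Pi.map ξ) A f) := by
  obtain ⟨g, hg, rfl⟩ := hf
  exact ⟨_, (hg.fderiv_right (by simp)).clm_apply (contDiff_indicator_piMap (fun m : W => hξ m) _),
    lieDerivOn_comp_restrict (hg.differentiable (by simp)) ξ A⟩

lemma IsSmoothCylinder.lieDerivOn_comm {W : Finset M} {f : (M → E) → F}
    (hf : IsSmoothCylinder W f) {ξ : M → E → E} (hξ : ∀ m, ContDiff ℝ ∞ (ξ m)) (A B : Set M) :
    lieDerivOn (Pi.map ξ) A (lieDerivOn (Pi.map ξ) B f) =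
      lieDerivOn (Pi.map ξ) B (lieDerivOn (Pi.map ξ) A f) := by
  obtain ⟨g, hg, rfl⟩ := hf
  have hdiff := hg.differentiable (by simp)
  have hdiff' (C : Set W) :
      Differentiable ℝ fun x => fderiv ℝ g x (C.indicator (Pi.map (fun m : W => ξ m) x)) :=
    ((hg.fderiv_right (m := ∞) (by simp)).clm_apply
      (contDiff_indicator_piMap (fun m : W => hξ m) C)).differentiable (by simp)
  simp only [lieDerivOn_comp_restrict, hdiff, hdiff']
  funext u
  exact fderiv_fderiv_indicator_piMap_comm (contDiff_infty.1 hg 2)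
    (fun m : W => (hξ m).differentiable (by simp)) _ _ (W.restrict u)

end Cylinder

section DifferenceFunction

variable {p q : ℕ} {F : DFun p q} {S : Finset (Idx p)}

/-- The evolutionary vector field `u ↦ (m ↦ Q(m,u))` of a characteristic `Q` on the space of
fields. -/
def charField (Q : Fin q → DFun p q) : Fld p q → Fld p q := fun u m α => Q α m u

lemma IsDiffFun.isSmoothCylinder (hF : IsDiffFun F S) (n : Idx p) :
    IsSmoothCylinder (S.image (n + ·)) (F n) := by
  obtain ⟨G, hG, hFG⟩ := hF
  refine ⟨fun x => G n fun J => x ⟨n + J, Finset.mem_image_of_mem _ J.2⟩, (hG n).comp ?_,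
    funext (hFG n)⟩
  fun_prop

lemma exists_charField_eq_piMap {Q : Fin q → DFun p q} (hQ : ∀ α, IsDiffFun (Q α) {0}) :
    ∃ ξ : Idx p → (Fin q → ℝ) → Fin q → ℝ,
      (∀ n, ContDiff ℝ ∞ (ξ n)) ∧ charField Q = Pi.map ξ := by
  choose G hG hQG using hQ
  refine ⟨fun n x α => G α n fun _ => x, fun n => contDiff_pi.2 fun α => (hG α n).comp ?_, ?_⟩
  · fun_prop
  · funext u n α
    rw [charField, hQG, Pi.map_apply]
    congr! with J
    simp [Finset.mem_singleton.1 J.2]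

/-- The field whose only nonzero value is `u^α(m) = 1`: the direction of the partial derivative
with respect to `u^α(m)`. -/
def unitField (m : Idx p) (α : Fin q) : Fld p q := Pi.single m (Pi.single α 1)

lemma upd_eq_add_smul_unitField (u : Fld p q) (m : Idx p) (α : Fin q) (t : ℝ) :
    upd u m α t = u + (t - u m α) • unitField m α := by
  funext m' β
  by_cases hm : m' = m <;> by_cases hβ : β = α <;> subst_vars <;> simp [upd, unitField, *]

lemma pd_eq_lineDeriv (F : DFun p q) (J : Idx p) (α : Fin q) (n : Idx p) (u : Fld p q) :
    pd F J α n u = lineDeriv ℝ (F n) u (unitField (n + J) α) := by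
  simp only [pd, upd_eq_add_smul_unitField]
  rw [deriv_comp_sub_const
    (f := fun t => F n (u + t • unitField (n + J) α)), sub_self, lineDeriv]

lemma IsDiffFun.lineDeriv_eq_sum (hF : IsDiffFun F S) (n : Idx p) (u v : Fld p q) :
    lineDeriv ℝ (F n) u v = ∑ α, ∑ J ∈ S, v (n + J) α * pd F J α n u := by
  obtain ⟨D, hD⟩ := (hF.isSmoothCylinder n).exists_lineDeriv_eq_clm u
  have hexpand : (S.image (n + ·)).restrict v =
      ∑ α, ∑ J ∈ S, v (n + J) α • (S.image (n + ·)).restrict (unitField (n + J) α) := by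
    funext ⟨m, hm⟩ β
    obtain ⟨J, hJ, rfl⟩ := Finset.mem_image.1 hm
    simp [unitField, Finset.sum_apply, Pi.single_apply, hJ]
  simp only [pd_eq_lineDeriv, hD, hexpand, map_sum, map_smul, smul_eq_mul]

lemma IsDiffFun.lieDerivOn_charField_eq_sum (hF : IsDiffFun F S) (Q : Fin q → DFun p q)
    (A : Set (Idx p)) (n : Idx p) (u : Fld p q) :
    lieDerivOn (charField Q) A (F n) u =
      ∑ α, ∑ J ∈ S with n + J ∈ A, Q α (n + J) u * pd F J α n u := by
  simp [lieDerivOn, hF.lineDeriv_eq_sum, indicator_apply, Finset.sum_filter, ite_apply, charField]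

lemma IsDiffFun.prv_eq_lieDerivOn (hF : IsDiffFun F S) (Q : Fin q → DFun p q) (n : Idx p) :
    prv Q S F n = lieDerivOn (charField Q) univ (F n) := by
  funext u
  simp [prv, hF.lieDerivOn_charField_eq_sum]

lemma IsDiffFun.lieDerivOn_charField_eq_zero (hF : IsDiffFun F S) (Q : Fin q → DFun p q)
    {A : Set (Idx p)} {n : Idx p} (hA : ∀ J ∈ S, n + J ∉ A) (u : Fld p q) :
    lieDerivOn (charField Q) A (F n) u = 0 := by
  simp [hF.lieDerivOn_charField_eq_sum, Finset.filter_false_of_mem hA]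

lemma IsDiffFun.lieDerivOn_charField_eq_univ (hF : IsDiffFun F S) (Q : Fin q → DFun p q)
    {A : Set (Idx p)} {n : Idx p} (hA : ∀ J ∈ S, n + J ∈ A) (u : Fld p q) :
    lieDerivOn (charField Q) A (F n) u = lieDerivOn (charField Q) univ (F n) u := by
  simp [hF.lieDerivOn_charField_eq_sum, Finset.filter_true_of_mem hA]

-- The summand with indices `J ≤ K` in `TT` is the derivative of `L(l)`, `l = n - 1ᵢ - (K - J)`,
-- with respect to the field value at `l + K`; here `l ≤ n - 1ᵢ` says `J ≤ K`, and `n ≤ l + K` says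
-- `1ᵢ ≤ J`.
lemma IsDiffFun.TT_eq_sum_lieDerivOn {L : DFun p q} (hL : IsDiffFun L S) (Q : Fin q → DFun p q)
    (i : Fin p) {n : Idx p} {B : Finset (Idx p)} (hB : ∀ l ∈ B, l ≤ n - Pi.single i 1)
    (hSB : ∀ K ∈ S, ∀ l ≤ n - Pi.single i 1, n ≤ l + K → l ∈ B) :
    TT Q S i L n = fun u => ∑ l ∈ B, lieDerivOn (charField Q) (Ici n) (L l) u := by
  funext u
  simp only [hL.lieDerivOn_charField_eq_sum, TT, hEuler, Finset.mul_sum]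
  rw [Finset.sum_comm (s := B)]
  refine Finset.sum_congr rfl fun α _ => ?_
  rw [Finset.sum_comm' (s' := fun K => Finset.Icc (Pi.single i 1) K) (t' := S)
      (by simp only [Finset.mem_biUnion, Finset.mem_filter, Finset.mem_Icc]; grind),
    Finset.sum_comm' (s := B) (s' := fun K => {l ∈ B | n ≤ l + K}) (t' := S)
      (by simp only [Finset.mem_filter, mem_Ici]; grind)]
  refine Finset.sum_congr rfl fun K hK => Finset.sum_nbij'
    (fun J => n - Pi.single i 1 - (K - J)) (fun l => l + K - n + Pi.single i 1) ?_ ?_ ?_ ?_ ?_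
  · intro J hJ
    obtain ⟨hJ, hJK⟩ := Finset.mem_Icc.1 hJ
    have hl : n - Pi.single i 1 - (K - J) ≤ n - Pi.single i 1 := sub_le_self _ (sub_nonneg.2 hJK)
    have hnK : n ≤ n - Pi.single i 1 - (K - J) + K := by
      rw [show n - Pi.single i 1 - (K - J) + K = n + (J - Pi.single i 1) by abel]
      exact le_add_of_nonneg_right (sub_nonneg.2 hJ)
    exact Finset.mem_filter.2 ⟨hSB K hK _ hl hnK, hnK⟩
  · intro l hl
    obtain ⟨hl, hnK⟩ := Finset.mem_filter.1 hl
    refine Finset.mem_Icc.2 ⟨le_add_of_nonneg_left (sub_nonneg.2 hnK), ?_⟩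
    rw [show l + K - n + Pi.single i 1 = K - (n - Pi.single i 1 - l) by abel]
    exact sub_le_self _ (sub_nonneg.2 (hB l hl))
  · intro J _
    abel
  · intro l _
    abel
  · intro J _
    congr 2
    abel

lemma lieDerivOn_univ_lieDerivOn {Q : Fin q → DFun p q} (hQ : ∀ α, IsDiffFun (Q α) {0})
    {L R : DFun p q} {SR : Finset (Idx p)} (hL : IsDiffFun L S) (hR : IsDiffFun R SR)
    {l l' : Idx p} (hsym : ∀ u, prv Q S L l u = R l' u - R l u) (A : Set (Idx p)) (u : Fld p q) :
    lieDerivOn (charField Q) univ (lieDerivOn (charField Q) A (L l)) u =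
      lieDerivOn (charField Q) A (R l') u - lieDerivOn (charField Q) A (R l) u := by
  obtain ⟨ξ, hξ, hX⟩ := exists_charField_eq_piMap hQ
  rw [hX, (hL.isSmoothCylinder l).lieDerivOn_comm hξ, ← hX, ← hL.prv_eq_lieDerivOn, funext hsym]
  exact lieDerivOn_sub ((hR.isSmoothCylinder l').lineDifferentiableAt _ _)
    ((hR.isSmoothCylinder l).lineDifferentiableAt _ _)

end DifferenceFunction

section OneDimensional

variable {q : ℕ} {L R : DFun 1 q} {S SR : Finset (Idx 1)}

lemma exists_lt_nsmul_single (b : Idx 1) : ∃ N : ℕ, b < N • Pi.single 0 1 := by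
  have hb0 : b 0 < (((b 0).toNat + 1) • (Pi.single 0 1 : Idx 1)) 0 := by
    rw [Pi.smul_apply, Pi.single_eq_same, nsmul_one]
    omega
  exact ⟨_, StrongLT.lt (Fin.forall_fin_one.2 hb0)⟩

lemma exists_eq_sub_succ_nsmul_single {n l : Idx 1} (hl : l ≤ n - Pi.single 0 1) :
    ∃ k : ℕ, l = n - (k + 1) • Pi.single 0 1 := by
  have hl0 : l 0 ≤ n 0 - 1 := by simpa using hl 0
  refine ⟨(n 0 - 1 - l 0).toNat, funext fun i => ?_⟩
  rw [Subsingleton.elim i 0, Pi.sub_apply, Pi.smul_apply, Pi.single_eq_same, nsmul_one]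
  omega

lemma IsDiffFun.TT_zero_eq_sum_range (hL : IsDiffFun L S) (Q : Fin q → DFun 1 q) (n : Idx 1)
    {N : ℕ} (hN : ∀ K ∈ S, K ≤ N • Pi.single 0 1) :
    TT Q S 0 L n = fun u => ∑ k ∈ Finset.range N,
      lieDerivOn (charField Q) (Ici n) (L (n - (k + 1) • Pi.single 0 1)) u := by
  have hinj : Function.Injective fun k : ℕ => n - (k + 1) • (Pi.single 0 1 : Idx 1) := by
    intro j k hjk
    simpa using congrFun hjk 0
  rw [hL.TT_eq_sum_lieDerivOn Q 0
    (B := (Finset.range N).image fun k : ℕ => n - (k + 1) • (Pi.single 0 1 : Idx 1))]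
  · simp only [Finset.sum_image hinj.injOn]
  · simp only [Finset.forall_mem_image]
    intro k _
    rw [succ_nsmul, ← sub_sub, sub_right_comm]
    exact sub_le_self _ (nsmul_nonneg (by simp) k)
  · intro K hK l hl hnK
    obtain ⟨k, rfl⟩ := exists_eq_sub_succ_nsmul_single hl
    refine Finset.mem_image_of_mem _ (Finset.mem_range.2 ?_)
    have hKN := hN K hK 0
    have hnK := hnK 0
    simp only [Pi.add_apply, Pi.sub_apply, Pi.smul_apply, Pi.single_eq_same, nsmul_one] at hKN hnK
    omega

lemma lieDerivOn_univ_TT {Q : Fin q → DFun 1 q} (hQ : ∀ α, IsDiffFun (Q α) {0})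
    (hL : IsDiffFun L S) (hR : IsDiffFun R SR)
    (hsym : ∀ n u, prv Q S L n u = R (n + Pi.single 0 1) u - R n u) (n : Idx 1) (u : Fld 1 q) :
    lieDerivOn (charField Q) univ (TT Q S 0 L n) u = lieDerivOn (charField Q) (Ici n) (R n) u := by
  obtain ⟨b, hb⟩ := (S ∪ SR).exists_le
  obtain ⟨N, hN⟩ := exists_lt_nsmul_single b
  obtain ⟨ξ, hξ, hX⟩ := exists_charField_eq_piMap hQ
  set y : ℕ → ℝ := fun k => lieDerivOn (charField Q) (Ici n) (R (n - k • Pi.single 0 1)) u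
  have hterm (k : ℕ) : lieDerivOn (charField Q) univ
      (lieDerivOn (charField Q) (Ici n) (L (n - (k + 1) • Pi.single 0 1))) u = y k - y (k + 1) := by
    refine lieDerivOn_univ_lieDerivOn hQ hL hR (fun u => ?_) _ u
    rw [hsym, succ_nsmul, ← sub_sub, sub_add_cancel]
  have hyN : y N = 0 := by
    refine hR.lieDerivOn_charField_eq_zero Q (fun K hK hmem => ?_) u
    have hNK : N • Pi.single 0 1 ≤ K := by
      simpa [sub_add_eq_add_sub, add_sub_assoc] using mem_Ici.1 hmem
    exact ((hb K (Finset.mem_union_right S hK)).trans_lt hN).not_ge hNK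
  have hsmooth (l : Idx 1) :
      LineDifferentiableAt ℝ (lieDerivOn (charField Q) (Ici n) (L l)) u
        (univ.indicator (charField Q u)) := by
    rw [hX]
    exact ((hL.isSmoothCylinder l).lieDerivOn hξ _).lineDifferentiableAt _ _
  rw [hL.TT_zero_eq_sum_range Q n fun K hK => (hb K (Finset.mem_union_left SR hK)).trans hN.le,
    lieDerivOn_sum fun k _ => hsmooth _, Finset.sum_congr rfl fun k _ => hterm k,
    Finset.sum_range_sub', hyN, sub_zero]
  simp only [y, zero_nsmul, sub_zero]

end OneDimensional

theorem stmt_12_general {q : ℕ} (Q : Fin q → DFun 1 q) (hQ : ∀ α, IsDiffFun (Q α) {0})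
    (L : DFun 1 q) (S : Finset (Idx 1)) (hL : IsDiffFun L S)
    (R : DFun 1 q) (SR : Finset (Idx 1)) (hR : IsDiffFun R SR) (hSR : ∀ K ∈ SR, 0 ≤ K)
    (hsym : ∀ n u, prv Q S L n u = R (n + Pi.single 0 1) u - R n u)
    (SP : Finset (Idx 1)) (hSP : IsDiffFun (fun n u => TT Q S 0 L n u - R n u) SP)
    (n : Idx 1) (u : Fld 1 q) :
    prv Q SP (fun n u => TT Q S 0 L n u - R n u) n u = 0 := by
  have hRdiff (v : Fld 1 q) : LineDifferentiableAt ℝ (R n) u v :=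
    (hR.isSmoothCylinder n).lineDifferentiableAt u v
  have hTTdiff (v : Fld 1 q) : LineDifferentiableAt ℝ (TT Q S 0 L n) u v := by
    simpa using! ((hSP.isSmoothCylinder n).lineDifferentiableAt u v).fun_add (hRdiff v)
  rw [hSP.prv_eq_lieDerivOn, lieDerivOn_sub (hTTdiff _) (hRdiff _),
    lieDerivOn_univ_TT hQ hL hR hsym,
    hR.lieDerivOn_charField_eq_univ Q (A := Ici n) (fun J hJ => le_add_of_nonneg_right (hSR J hJ)),
    sub_self]

/-- **p = 1.** Let `Q` be a Lie point characteristic generating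
divergence variational symmetries of the difference Lagrangian `L`, i.e.
`(pr v L)(n,u) = R(n+1,u) − R(n,u)` for all `n` and `u`, where `R` depends only
on forward values.  Then the prolonged vector field annihilates the first
integral `P = T(L) − R`: `(pr v P)(n,u) = 0` for all `n` and `u`. -/
theorem stmt_12 {q : ℕ} (hq : 1 ≤ q)
    (Q : Fin q → DFun 1 q)
    (hQ : ∀ α, IsDiffFun (Q α) ({(0 : Idx 1)} : Finset (Idx 1)))
    (L : DFun 1 q) (S : Finset (Idx 1)) (hL : IsDiffFun L S)
    (hS : ∀ K ∈ S, (0 : Idx 1) ≤ K)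
    (R : DFun 1 q) (SR : Finset (Idx 1)) (hR : IsDiffFun R SR)
    (hSR : ∀ K ∈ SR, (0 : Idx 1) ≤ K)
    (hsym : ∀ (n : Idx 1) (u : Fld 1 q),
      prv Q S L n u = R (n + Pi.single 0 (1 : ℤ)) u - R n u)
    (SP : Finset (Idx 1))
    (hSP : IsDiffFun (fun n' u' => TT Q S 0 L n' u' - R n' u') SP) :
    ∀ (n : Idx 1) (u : Fld 1 q),
      prv Q SP (fun n' u' => TT Q S 0 L n' u' - R n' u') n u = 0 :=
  stmt_12_general Q hQ L S hL R SR hR hSR hsym SP hSP
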